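/- arXiv:2209.09942 — 7 statements merged into one kernel-verified Lean document; each statement's English description precedes it below -/
import Mathlib

section
/- Let ρ_AB be a density matrix on ℂ^m ⊗ ℂ^n. If the set Λ_A(ρ_AB) admits a preparation-and-measurement noncontextual model, then ρ_AB is separable. -/
open Matrix
open scoped Kronecker ComplexOrder BigOperators

noncomputable section

/-- A density matrix: positive semidefinite with trace 1. -/
def IsDensity {d : Type*} [Fintype d] [DecidableEq d] (ρ : Matrix d d ℂ) : Prop :=
  ρ.PosSemidef ∧ ρ.trace = 1

/-- Partial trace over the second (B) factor. -/
def trB {m n : ℕ} (ρ : Matrix (Fin m × Fin n) (Fin m × Fin n) ℂ) :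
    Matrix (Fin m) (Fin m) ℂ := fun i j => ∑ k, ρ (i, k) (j, k)

/-- Partial trace over the first (A) factor. -/
def trA {m n : ℕ} (ρ : Matrix (Fin m × Fin n) (Fin m × Fin n) ℂ) :
    Matrix (Fin n) (Fin n) ℂ := fun k l => ∑ i, ρ (i, k) (i, l)

/-- The set of states remotely preparable on Alice's side. -/
def LambdaA {m n : ℕ} (ρ : Matrix (Fin m × Fin n) (Fin m × Fin n) ℂ) :
    Set (Matrix (Fin m) (Fin m) ℂ) :=
  {σ | IsDensity σ ∧ ∃ E : Matrix (Fin n) (Fin n) ℂ, E.PosSemidef ∧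
    σ = trB (((1 : Matrix (Fin m) (Fin m) ℂ) ⊗ₖ E) * ρ)}

/-- The set of states remotely preparable on Bob's side. -/
def LambdaB {m n : ℕ} (ρ : Matrix (Fin m × Fin n) (Fin m × Fin n) ℂ) :
    Set (Matrix (Fin n) (Fin n) ℂ) :=
  {σ | IsDensity σ ∧ ∃ E : Matrix (Fin m) (Fin m) ℂ, E.PosSemidef ∧
    σ = trA ((E ⊗ₖ (1 : Matrix (Fin n) (Fin n) ℂ)) * ρ)}

/-- A preparation-and-measurement noncontextual model for a set `K` of density matrices. -/
def HasNCModel {d : ℕ} (K : Set (Matrix (Fin d) (Fin d) ℂ)) : Prop :=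
  ∃ (L : ℕ) (N ω : Fin L → Matrix (Fin d) (Fin d) ℂ),
    (∀ l, (N l).IsHermitian) ∧ (∀ l, IsDensity (ω l)) ∧
    (∀ ρ ∈ K, ∀ l, 0 ≤ (ρ * N l).trace) ∧
    (∀ ρ ∈ K, ∑ l, (ρ * N l).trace = 1) ∧
    (∀ ρ ∈ K, ∀ M : Matrix (Fin d) (Fin d) ℂ, M.PosSemidef → (1 - M).PosSemidef →
      (ρ * M).trace = ∑ l, (ρ * N l).trace * (ω l * M).trace)

/-- Separability of a bipartite density matrix. -/
def Separable {m n : ℕ} (ρ : Matrix (Fin m × Fin n) (Fin m × Fin n) ℂ) : Prop :=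
  ∃ (L : ℕ) (ω : Fin L → Matrix (Fin m) (Fin m) ℂ)
    (κ : Fin L → Matrix (Fin n) (Fin n) ℂ),
    (∀ l, IsDensity (ω l)) ∧ (∀ l, (κ l).PosSemidef) ∧ ρ = ∑ l, ω l ⊗ₖ κ l

/-- A complex matrix with vanishing quadratic form is zero. -/
lemma quad_zero {d : ℕ} (A : Matrix (Fin d) (Fin d) ℂ)
    (h : ∀ x : Fin d → ℂ, star x ⬝ᵥ (A *ᵥ x) = 0) : A = 0 := by
  have hT : Matrix.toEuclideanLin A = 0 := by
    rw [← inner_map_self_eq_zero]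
    intro x
    rw [← inner_conj_symm]
    have := h x.ofLp
    rw [EuclideanSpace.inner_eq_star_dotProduct]
    rw [dotProduct_comm] at this
    simpa [Matrix.toLpLin_apply] using this
  exact (LinearEquiv.map_eq_zero_iff _).1 hT

lemma psd_of_quad {d : ℕ} (A : Matrix (Fin d) (Fin d) ℂ)
    (h : ∀ x : Fin d → ℂ, 0 ≤ star x ⬝ᵥ (A *ᵥ x)) : A.PosSemidef := by
  rw [posSemidef_iff_dotProduct_mulVec]
  refine ⟨?_, h⟩
  have : Aᴴ - A = 0 := by
    apply quad_zero
    intro x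
    have h1 : star x ⬝ᵥ (Aᴴ *ᵥ x) = star (star x ⬝ᵥ (A *ᵥ x)) := by
      rw [Matrix.star_dotProduct, star_mulVec, dotProduct_mulVec, dotProduct_comm]
      simp [dotProduct_comm]
    rw [sub_mulVec, dotProduct_sub, h1, (IsSelfAdjoint.of_nonneg (h x)).star_eq, sub_self]
  exact sub_eq_zero.1 this

lemma trace_mul_rankOne {d : ℕ} (A : Matrix (Fin d) (Fin d) ℂ) (x : Fin d → ℂ) :
    (A * vecMulVec x (star x)).trace = star x ⬝ᵥ (A *ᵥ x) := by
  rw [mul_vecMulVec, trace_vecMulVec, dotProduct_comm]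

lemma eq_zero_of_trace_psd {d : ℕ} (A : Matrix (Fin d) (Fin d) ℂ)
    (h : ∀ M : Matrix (Fin d) (Fin d) ℂ, M.PosSemidef → (A * M).trace = 0) : A = 0 := by
  apply quad_zero
  intro x
  rw [← trace_mul_rankOne]
  exact h _ (posSemidef_vecMulVec_self_star x)

open scoped MatrixOrder Matrix.Norms.L2Operator in
lemma exists_scale {d : ℕ} (M : Matrix (Fin d) (Fin d) ℂ) (hM : M.PosSemidef) :
    ∃ c : ℝ, 0 < c ∧ (1 - c • M).PosSemidef := by
  have h1 : M ≤ algebraMap ℝ _ ‖M‖ := IsSelfAdjoint.le_algebraMap_norm_self hM.1.isSelfAdjoint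
  have h2 : M ≤ algebraMap ℝ _ (‖M‖ + 1) := by
    refine h1.trans ?_
    rw [Matrix.le_iff, ← map_sub, add_sub_cancel_left, map_one]
    exact PosSemidef.one
  have hp : 0 < ‖M‖ + 1 := by positivity
  refine ⟨(‖M‖ + 1)⁻¹, by positivity, ?_⟩
  rw [Matrix.le_iff] at h2
  have h3 := h2.smul (inv_pos.2 hp).le
  rwa [smul_sub, Algebra.algebraMap_eq_smul_one, smul_smul, inv_mul_cancel₀ hp.ne', one_smul] at h3

lemma trB_apply {m n : ℕ} (ρ : Matrix (Fin m × Fin n) (Fin m × Fin n) ℂ)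
    (E : Matrix (Fin n) (Fin n) ℂ) (i j : Fin m) :
    trB (((1 : Matrix (Fin m) (Fin m) ℂ) ⊗ₖ E) * ρ) i j = ∑ k, ∑ q, E k q * ρ (i, q) (j, k) := by
  simp [trB, Matrix.mul_apply, Fintype.sum_prod_type, Matrix.one_apply, ite_mul]

lemma trB_smul {m n : ℕ} (ρ : Matrix (Fin m × Fin n) (Fin m × Fin n) ℂ)
    (E : Matrix (Fin n) (Fin n) ℂ) (c : ℝ) :
    trB (((1 : Matrix (Fin m) (Fin m) ℂ) ⊗ₖ (c • E)) * ρ) =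
      c • trB (((1 : Matrix (Fin m) (Fin m) ℂ) ⊗ₖ E) * ρ) := by
  ext i j
  simp only [trB_apply, Matrix.smul_apply, Finset.smul_sum, smul_mul_assoc]

open scoped MatrixOrder in
lemma exists_sqrt_psd {d : ℕ} (E : Matrix (Fin d) (Fin d) ℂ) (hE : E.PosSemidef) :
    ∃ B : Matrix (Fin d) (Fin d) ℂ, E = Bᴴ * B := by
  obtain ⟨B, hB⟩ := CStarAlgebra.nonneg_iff_eq_star_mul_self.1 hE.nonneg
  exact ⟨B, hB⟩

lemma trB_psd {m n : ℕ} (ρ : Matrix (Fin m × Fin n) (Fin m × Fin n) ℂ) (hρ : ρ.PosSemidef)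
    (E : Matrix (Fin n) (Fin n) ℂ) (hE : E.PosSemidef) :
    (trB (((1 : Matrix (Fin m) (Fin m) ℂ) ⊗ₖ E) * ρ)).PosSemidef := by
  obtain ⟨B, rfl⟩ := exists_sqrt_psd E hE
  have h1 := hρ.mul_mul_conjTranspose_same ((1 : Matrix (Fin m) (Fin m) ℂ) ⊗ₖ B)
  have h2 : trB (((1 : Matrix (Fin m) (Fin m) ℂ) ⊗ₖ (Bᴴ * B)) * ρ) =
      ∑ k : Fin n, (((1 : Matrix (Fin m) (Fin m) ℂ) ⊗ₖ B) * ρ *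
        ((1 : Matrix (Fin m) (Fin m) ℂ) ⊗ₖ B)ᴴ).submatrix (fun i => (i, k)) (fun i => (i, k)) := by
    ext i j
    rw [trB_apply]
    simp only [Matrix.sum_apply, submatrix_apply, conjTranspose_kronecker, conjTranspose_one,
      Matrix.mul_apply, Fintype.sum_prod_type, kroneckerMap_apply, Matrix.one_apply, ite_mul,
      mul_ite, zero_mul, mul_zero, one_mul, Finset.sum_ite_irrel, Finset.sum_const_zero,
      Finset.sum_ite_eq, Finset.sum_ite_eq', Finset.mem_univ, if_true, Finset.sum_mul,
      conjTranspose_apply]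
    rw [Finset.sum_comm_cycle]
    refine Finset.sum_congr rfl fun a _ => Finset.sum_congr rfl fun b _ =>
      Finset.sum_congr rfl fun c _ => ?_
    ring
  rw [h2]
  exact posSemidef_sum _ fun k _ => h1.submatrix _

/-- The operator `κ` on Bob's side dual to an effect `N` on Alice's side. -/
def kap {m n : ℕ} (ρ : Matrix (Fin m × Fin n) (Fin m × Fin n) ℂ) (N : Matrix (Fin m) (Fin m) ℂ) :
    Matrix (Fin n) (Fin n) ℂ := fun q k => ∑ i, ∑ j, ρ (i, q) (j, k) * N j i

lemma trace_kap {m n : ℕ} (ρ : Matrix (Fin m × Fin n) (Fin m × Fin n) ℂ)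
    (N : Matrix (Fin m) (Fin m) ℂ) (E : Matrix (Fin n) (Fin n) ℂ) :
    (trB (((1 : Matrix (Fin m) (Fin m) ℂ) ⊗ₖ E) * ρ) * N).trace = (kap ρ N * E).trace := by
  simp only [Matrix.trace, Matrix.diag_apply, Matrix.mul_apply, trB_apply, kap, Finset.sum_mul]
  rw [Finset.sum_congr rfl fun i _ => Finset.sum_comm_cycle, Finset.sum_comm]
  refine Finset.sum_congr rfl fun q _ => ?_
  rw [Finset.sum_comm_cycle]
  refine Finset.sum_congr rfl fun k _ => Finset.sum_congr rfl fun i _ =>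
    Finset.sum_congr rfl fun j _ => ?_
  ring

theorem contextuality_precondition_for_entanglement {m n : ℕ}
    (ρ : Matrix (Fin m × Fin n) (Fin m × Fin n) ℂ) (hρ : IsDensity ρ)
    (h : HasNCModel (LambdaA ρ)) : Separable ρ := by
  obtain ⟨L, N, ω, hN, hω, hpos, -, hrep⟩ := h
  set S : Matrix (Fin n) (Fin n) ℂ → Matrix (Fin m) (Fin m) ℂ :=
    fun E => trB (((1 : Matrix (Fin m) (Fin m) ℂ) ⊗ₖ E) * ρ) with hS
  -- every `S E` is a nonnegative multiple of an element of `LambdaA ρ`, or zero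
  have key : ∀ E, E.PosSemidef → S E = 0 ∨ ∃ t : ℝ, 0 < t ∧ ∃ σ ∈ LambdaA ρ, S E = t • σ := by
    intro E hE
    have hp : (S E).PosSemidef := trB_psd ρ hρ.1 E hE
    by_cases h0 : (S E).trace = 0
    · exact Or.inl (hp.trace_eq_zero_iff.1 h0)
    · right
      have hnn := hp.trace_nonneg
      obtain ⟨hre, him⟩ := Complex.nonneg_iff.1 hnn
      have htr : (S E).trace = (((S E).trace.re : ℝ) : ℂ) := Complex.ext rfl (by simp [← him])
      set t := (S E).trace.re with ht
      have htpos : 0 < t := lt_of_le_of_ne hre fun h => h0 (by rw [htr, ← h]; simp)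
      refine ⟨t, htpos, t⁻¹ • S E, ⟨⟨hp.smul (inv_pos.2 htpos).le, ?_⟩, t⁻¹ • E,
        hE.smul (inv_pos.2 htpos).le, ?_⟩, ?_⟩
      · rw [trace_smul, htr, Complex.real_smul, ← Complex.ofReal_mul, inv_mul_cancel₀ htpos.ne']
        simp
      · rw [trB_smul]
      · rw [smul_smul, mul_inv_cancel₀ htpos.ne', one_smul]
  have h1 : ∀ E, E.PosSemidef → ∀ l, 0 ≤ (S E * N l).trace := by
    intro E hE l
    rcases key E hE with h0 | ⟨t, ht, σ, hσ, h0⟩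
    · simp [h0]
    · rw [h0, Matrix.smul_mul, trace_smul]
      exact smul_nonneg ht.le (hpos σ hσ l)
  have h2 : ∀ E, E.PosSemidef → S E = ∑ l, (S E * N l).trace • ω l := by
    intro E hE
    rcases key E hE with h0 | ⟨t, ht, σ, hσ, h0⟩
    · simp [h0]
    · have h3 : σ - ∑ l, (σ * N l).trace • ω l = 0 := by
        apply eq_zero_of_trace_psd
        intro M hM
        obtain ⟨c, hc, hcM⟩ := exists_scale M hM
        have h4 := hrep σ hσ (c • M) (hM.smul hc.le) hcM
        simp only [trace_smul, mul_smul_comm, ← Finset.smul_sum] at h4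
        have h5 := smul_right_injective ℂ hc.ne' h4
        simp only [Matrix.sub_mul, Matrix.sum_mul, trace_sub, trace_sum, Matrix.smul_mul,
          trace_smul, smul_eq_mul]
        rw [h5, sub_self]
      rw [h0]
      simp only [Matrix.smul_mul, trace_smul, smul_assoc, ← Finset.smul_sum]
      rw [← sub_eq_zero.1 h3]
  refine ⟨L, ω, fun l => kap ρ (N l), hω, fun l => ?_, ?_⟩
  · apply psd_of_quad
    intro x
    rw [← trace_mul_rankOne, ← trace_kap]
    exact h1 _ (posSemidef_vecMulVec_self_star x) l
  · ext ⟨i, q⟩ ⟨j, k⟩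
    have h3 : ρ.submatrix (fun q => (i, q)) (fun k => (j, k)) -
        ∑ l, ω l i j • kap ρ (N l) = 0 := by
      apply eq_zero_of_trace_psd
      intro E hE
      have h4 := congrFun (congrFun (h2 E hE) i) j
      simp only [hS, trace_kap] at h4
      rw [trB_apply, Matrix.sum_apply] at h4
      simp only [Matrix.sub_mul, Matrix.sum_mul, trace_sub, trace_sum, Matrix.smul_mul,
          trace_smul, smul_eq_mul, Matrix.smul_apply] at h4 ⊢
      rw [sub_eq_zero]
      simp only [mul_comm (ω _ i j)]
      rw [← h4, Finset.sum_comm]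
      simp only [Matrix.trace, Matrix.diag_apply, Matrix.mul_apply, mul_comm, submatrix_apply]
    have h5 := congrFun (congrFun (sub_eq_zero.1 h3) q) k
    simpa [Matrix.sum_apply] using h5
end
end

section
/- Let ρ_AB be a separable density matrix on ℂ^m ⊗ ℂ^n with a decomposition ρ_AB = ∑_λ ω_λ ⊗ K_λ, where each ω_λ is a density matrix on ℂ^m and each K_λ is a positive semidefinite n×n matrix. If every K_λ belongs to the complex linear span of Λ_B(ρ_AB), then Λ_A(ρ_AB) admits a preparation-and-measurement noncontextual model. -/
open Matrix
open scoped Kronecker ComplexOrder BigOperators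

noncomputable section

theorem aux_trace_nonneg {n : ℕ} {A B : Matrix (Fin n) (Fin n) ℂ}
    (hA : A.PosSemidef) (hB : B.PosSemidef) : 0 ≤ (A * B).trace := by
  obtain ⟨C, rfl⟩ : ∃ C : Matrix (Fin n) (Fin n) ℂ, A = Cᴴ * C := by
    open scoped MatrixOrder in
    exact (CStarAlgebra.nonneg_iff_eq_star_mul_self (a := A)).1 hA.nonneg
  rw [Matrix.mul_assoc, Matrix.trace_mul_comm]
  exact (hB.mul_mul_conjTranspose_same C).trace_nonneg

theorem aux_trB {m n L : ℕ} (E : Matrix (Fin n) (Fin n) ℂ)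
    (ω : Fin L → Matrix (Fin m) (Fin m) ℂ) (κ : Fin L → Matrix (Fin n) (Fin n) ℂ) :
    trB (((1 : Matrix (Fin m) (Fin m) ℂ) ⊗ₖ E) * ∑ l, ω l ⊗ₖ κ l)
      = ∑ l, (E * κ l).trace • ω l := by
  rw [Finset.mul_sum]
  simp_rw [← Matrix.mul_kronecker_mul, Matrix.one_mul]
  ext i j
  simp only [trB, Matrix.sum_apply, Matrix.kroneckerMap_apply, Matrix.smul_apply, smul_eq_mul,
    Matrix.trace, Matrix.diag_apply, Finset.sum_mul]
  rw [Finset.sum_comm]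
  exact Finset.sum_congr rfl fun _ _ => Finset.sum_congr rfl fun _ _ => mul_comm _ _

theorem aux_trA {m n L : ℕ} (E : Matrix (Fin m) (Fin m) ℂ)
    (ω : Fin L → Matrix (Fin m) (Fin m) ℂ) (κ : Fin L → Matrix (Fin n) (Fin n) ℂ) :
    trA ((E ⊗ₖ (1 : Matrix (Fin n) (Fin n) ℂ)) * ∑ l, ω l ⊗ₖ κ l)
      = ∑ l, (E * ω l).trace • κ l := by
  rw [Finset.mul_sum]
  simp_rw [← Matrix.mul_kronecker_mul, Matrix.one_mul]
  ext i j
  simp only [trA, Matrix.sum_apply, Matrix.kroneckerMap_apply, Matrix.smul_apply, smul_eq_mul,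
    Matrix.trace, Matrix.diag_apply, Finset.sum_mul]
  rw [Finset.sum_comm]

theorem separable_to_noncontextual {m n L : ℕ}
    (ρ : Matrix (Fin m × Fin n) (Fin m × Fin n) ℂ) (hρ : IsDensity ρ)
    (ω : Fin L → Matrix (Fin m) (Fin m) ℂ) (κ : Fin L → Matrix (Fin n) (Fin n) ℂ)
    (hω : ∀ l, IsDensity (ω l)) (hκ : ∀ l, (κ l).PosSemidef)
    (hdec : ρ = ∑ l, ω l ⊗ₖ κ l)
    (hspan : ∀ l, κ l ∈ Submodule.span ℂ (LambdaB ρ)) :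
    HasNCModel (LambdaA ρ) := by
  subst hdec
  have h1 : ∀ l, ∃ X : Matrix (Fin m) (Fin m) ℂ, κ l = ∑ j, (X * ω j).trace • κ j := by
    intro l
    refine Submodule.span_induction (p := fun Y _ => ∃ X : Matrix (Fin m) (Fin m) ℂ,
      Y = ∑ j, (X * ω j).trace • κ j) ?_ ?_ ?_ ?_ (hspan l)
    · rintro Y ⟨_, E, _, rfl⟩
      exact ⟨E, aux_trA E ω κ⟩
    · exact ⟨0, by simp⟩
    · rintro _ _ _ _ ⟨X, rfl⟩ ⟨Y, rfl⟩
      exact ⟨X + Y, by simp [Matrix.add_mul, add_smul, Finset.sum_add_distrib]⟩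
    · rintro a _ _ ⟨X, rfl⟩
      exact ⟨a • X, by simp [Finset.smul_sum, smul_smul]⟩
  choose X hX using h1
  have hX' : ∀ l, κ l = ∑ j, ((X l)ᴴ * ω j).trace • κ j := by
    intro l
    have h := congrArg Matrix.conjTranspose (hX l)
    rw [(hκ l).1.eq, Matrix.conjTranspose_sum] at h
    rw [h]
    refine Finset.sum_congr rfl fun j _ => ?_
    rw [Matrix.conjTranspose_smul, (hκ j).1.eq, ← Matrix.trace_conjTranspose,
      Matrix.conjTranspose_mul, (hω j).1.1.eq, Matrix.trace_mul_comm]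
  let N : Fin L → Matrix (Fin m) (Fin m) ℂ := fun l => (1 / 2 : ℂ) • (X l + (X l)ᴴ)
  have hN : ∀ l, κ l = ∑ j, (N l * ω j).trace • κ j := by
    intro l
    have : ∑ j, (N l * ω j).trace • κ j = (1 / 2 : ℂ) • (κ l + κ l) := by
      conv_rhs => 
        congr
        · skip
        · congr
          · rw [hX l]
          · rw [hX' l]
      simp only [N, Matrix.add_mul, Matrix.smul_mul, Matrix.trace_smul, Matrix.trace_add,
        ← Finset.sum_add_distrib, Finset.smul_sum, ← add_smul, smul_smul, smul_eq_mul]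
    rw [this, ← two_smul ℂ (κ l), smul_smul]
    norm_num
  have hkey : ∀ E : Matrix (Fin n) (Fin n) ℂ, ∀ l,
      ((∑ j, (E * κ j).trace • ω j) * N l).trace = (E * κ l).trace := by
    intro E l
    conv_rhs => rw [hN l]
    simp only [Finset.sum_mul, Finset.mul_sum, Matrix.trace_sum, Matrix.smul_mul, Matrix.mul_smul,
      Matrix.trace_smul, smul_eq_mul]
    refine Finset.sum_congr rfl fun j _ => ?_
    rw [Matrix.trace_mul_comm (ω j), mul_comm]
  refine ⟨L, N, ω, ?_, hω, ?_, ?_, ?_⟩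
  · intro l
    simp [N, Matrix.IsHermitian, Matrix.conjTranspose_smul, add_comm]
  · rintro σ ⟨_, E, hE, rfl⟩ l
    rw [aux_trB, hkey]
    exact aux_trace_nonneg hE (hκ l)
  · rintro σ ⟨⟨_, ht⟩, E, hE, rfl⟩
    rw [aux_trB] at ht ⊢
    simp_rw [hkey]
    rw [← ht, Matrix.trace_sum]
    simp [Matrix.trace_smul, (hω _).2]
  · rintro σ ⟨_, E, hE, rfl⟩ M _ _
    rw [aux_trB]
    simp_rw [hkey]
    simp [Finset.sum_mul, Matrix.trace_sum]
end
end

section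
/- Let ρ_AB be a separable density matrix on ℂ^n ⊗ ℂ^n such that the linear map Ψ_{B→A}^ρ : E ↦ Tr_B[(I_A ⊗ E) ρ_AB], from n×n complex matrices to n×n complex matrices, is bijective. Then Λ_A(ρ_AB) admits a preparation-and-measurement noncontextual model. -/
open Matrix
open scoped Kronecker ComplexOrder BigOperators

noncomputable section

lemma trB_sep {n L : ℕ} (ω κ : Fin L → Matrix (Fin n) (Fin n) ℂ) (E : Matrix (Fin n) (Fin n) ℂ) :
    trB (((1 : Matrix (Fin n) (Fin n) ℂ) ⊗ₖ E) * ∑ l, ω l ⊗ₖ κ l)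
      = ∑ l, (E * κ l).trace • ω l := by
  rw [Finset.mul_sum]
  simp_rw [← Matrix.mul_kronecker_mul, Matrix.one_mul]
  ext i j
  simp only [trB, Matrix.sum_apply, Matrix.kroneckerMap_apply, Matrix.smul_apply, smul_eq_mul,
    Matrix.trace, Matrix.diag]
  rw [Finset.sum_comm]
  refine Finset.sum_congr rfl fun l _ => ?_
  rw [Finset.sum_mul]
  exact Finset.sum_congr rfl fun k _ => mul_comm _ _

open scoped MatrixOrder in
lemma trace_mul_psd {n : ℕ} {E κ : Matrix (Fin n) (Fin n) ℂ} (hE : E.PosSemidef)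
    (hκ : κ.PosSemidef) : 0 ≤ (E * κ).trace := by
  obtain ⟨B, rfl⟩ := CStarAlgebra.nonneg_iff_eq_star_mul_self.mp hκ.nonneg
  rw [Matrix.star_eq_conjTranspose, ← Matrix.mul_assoc, Matrix.trace_mul_comm, ← Matrix.mul_assoc]
  exact (hE.mul_mul_conjTranspose_same B).trace_nonneg

lemma exists_rep {n : ℕ} (f : Matrix (Fin n) (Fin n) ℂ →ₗ[ℂ] ℂ) :
    ∃ N : Matrix (Fin n) (Fin n) ℂ, ∀ σ, (σ * N).trace = f σ := by
  refine ⟨Matrix.of fun j i => f (Matrix.single i j 1), fun σ => ?_⟩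
  conv_rhs => rw [Matrix.matrix_eq_sum_single σ]
  simp only [map_sum, Matrix.trace, Matrix.diag, Matrix.mul_apply]
  refine Finset.sum_congr rfl fun i _ => Finset.sum_congr rfl fun j _ => ?_
  rw [Matrix.of_apply, ← smul_eq_mul, ← map_smul, Matrix.smul_single, smul_eq_mul, mul_one]

lemma exists_herm_rep {n : ℕ} (f : Matrix (Fin n) (Fin n) ℂ →ₗ[ℂ] ℂ) :
    ∃ N : Matrix (Fin n) (Fin n) ℂ, N.IsHermitian ∧
      ∀ σ : Matrix (Fin n) (Fin n) ℂ, σ.IsHermitian → 0 ≤ f σ → (σ * N).trace = f σ := by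
  obtain ⟨N, hN⟩ := exists_rep f
  refine ⟨(1 / 2 : ℝ) • (N + Nᴴ), ?_, fun σ hσ h0 => ?_⟩
  · rw [Matrix.IsHermitian, Matrix.conjTranspose_smul, Matrix.conjTranspose_add,
      Matrix.conjTranspose_conjTranspose, add_comm Nᴴ N]
    simp
  · have h1 : (σ * Nᴴ).trace = f σ := by
      have : (σ * Nᴴ).trace = star ((σ * N).trace) := by
        rw [← Matrix.trace_conjTranspose, Matrix.conjTranspose_mul, hσ.eq, Matrix.trace_mul_comm]
      rw [this, hN]
      exact (IsSelfAdjoint.of_nonneg h0).star_eq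
    rw [Matrix.mul_smul, Matrix.trace_smul, Matrix.mul_add, Matrix.trace_add, h1, hN,
      Complex.real_smul]
    push_cast
    ring

theorem separable_invertible_to_noncontextual {n : ℕ}
    (ρ : Matrix (Fin n × Fin n) (Fin n × Fin n) ℂ) (hρ : IsDensity ρ)
    (hsep : Separable ρ)
    (hbij : Function.Bijective (fun E : Matrix (Fin n) (Fin n) ℂ =>
      trB (((1 : Matrix (Fin n) (Fin n) ℂ) ⊗ₖ E) * ρ))) :
    HasNCModel (LambdaA ρ) := by
  obtain ⟨L, ω, κ, hω, hκ, rfl⟩ := hsep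
  simp_rw [trB_sep] at hbij
  let Ψ : Matrix (Fin n) (Fin n) ℂ →ₗ[ℂ] Matrix (Fin n) (Fin n) ℂ :=
    ∑ l, ((Matrix.traceLinearMap (Fin n) ℂ ℂ).comp (LinearMap.mulRight ℂ (κ l))).smulRight (ω l)
  have hΨ : ∀ E, Ψ E = ∑ l, (E * κ l).trace • ω l := fun E => by
    simp [Ψ, LinearMap.sum_apply]
  have hb : Function.Bijective Ψ := by
    convert hbij using 1
    exact funext hΨ
  let e := LinearEquiv.ofBijective Ψ hb
  let f : Fin L → Matrix (Fin n) (Fin n) ℂ →ₗ[ℂ] ℂ := fun l =>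
    (Matrix.traceLinearMap (Fin n) ℂ ℂ).comp
      ((LinearMap.mulRight ℂ (κ l)).comp e.symm.toLinearMap)
  have hf : ∀ l E, f l (Ψ E) = (E * κ l).trace := fun l E => by
    have : e.symm (Ψ E) = E := e.symm_apply_apply E
    simp [f, this]
  choose N hNh hN using fun l => exists_herm_rep (f l)
  have key : ∀ σ ∈ LambdaA (∑ l, ω l ⊗ₖ κ l), (∀ l, 0 ≤ (σ * N l).trace) ∧
      σ = ∑ l, (σ * N l).trace • ω l := by
    rintro σ ⟨hσ, E, hE, hσE⟩
    rw [trB_sep, ← hΨ] at hσE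
    have h0 : ∀ l, (0 : ℂ) ≤ f l σ := fun l => by
      rw [hσE, hf]
      exact trace_mul_psd hE (hκ l)
    have h1 : ∀ l, (σ * N l).trace = f l σ := fun l => hN l σ hσ.1.isHermitian (h0 l)
    refine ⟨fun l => (h1 l).symm ▸ h0 l, ?_⟩
    simp_rw [h1, hσE, hf]
    exact hΨ E
  have key2 : ∀ σ ∈ LambdaA (∑ l, ω l ⊗ₖ κ l), ∀ M : Matrix (Fin n) (Fin n) ℂ,
      (σ * M).trace = ∑ l, (σ * N l).trace * (ω l * M).trace := by
    intro σ hσ M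
    conv_lhs => rw [(key σ hσ).2]
    simp [Finset.sum_mul, Matrix.trace_sum]
  refine ⟨L, N, ω, hNh, hω, fun σ hσ => (key σ hσ).1, fun σ hσ => ?_,
    fun σ hσ M _ _ => key2 σ hσ M⟩
  have h := key2 σ hσ 1
  simp only [Matrix.mul_one, fun l => (hω l).2, hσ.1.2, mul_one] at h
  exact h.symm
end
end

section
/- Let K be a set of density matrices on ℂ^d that admits a preparation-and-measurement noncontextual model. For t ∈ {1,2,3} and b ∈ {0,1}, let σ_{t,b} ∈ cone(K) be such that (σ_{t,0} + σ_{t,1})/2 equals one fixed matrix σ_* for all t, and let M_{t,b} be positive semidefinite d×d matrices such that M_{t,0} + M_{t,1} = I for each t and (1/3) ∑_{t=1}^3 M_{t,b} = I/2 for each b. Then ∑_{t=1}^3 ∑_{b=0}^1 Tr(σ_{t,b} M_{t,b}) ≤ 5 Tr(σ_*). -/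
open Matrix
open scoped Kronecker ComplexOrder BigOperators

noncomputable section

/-- The cone generated by a set of density matrices: nonnegative real multiples. -/
def coneOf {d : ℕ} (K : Set (Matrix (Fin d) (Fin d) ℂ)) : Set (Matrix (Fin d) (Fin d) ℂ) :=
  {x | ∃ (μ : ℝ) (σ : Matrix (Fin d) (Fin d) ℂ), 0 ≤ μ ∧ σ ∈ K ∧ x = (μ : ℂ) • σ}

lemma trace_mul_nonneg_aux {d : ℕ} {A B : Matrix (Fin d) (Fin d) ℂ}
    (hA : A.PosSemidef) (hB : B.PosSemidef) : 0 ≤ (A * B).trace := by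
  obtain ⟨m, v, rfl⟩ := Matrix.posSemidef_iff_eq_sum_vecMulVec.mp hA
  rw [Finset.sum_mul, Matrix.trace_sum]
  refine Finset.sum_nonneg fun i _ => ?_
  rw [Matrix.vecMulVec_mul, Matrix.trace_vecMulVec, dotProduct_comm,
    ← Matrix.dotProduct_mulVec]
  exact hB.dotProduct_mulVec_nonneg _

lemma nonneg_real_aux {z : ℂ} (hz : 0 ≤ z) : ∃ r : ℝ, 0 ≤ r ∧ z = (r : ℂ) := by
  rw [Complex.le_def] at hz
  exact ⟨z.re, by simpa using hz.1, Complex.ext (by simp) (by simpa using hz.2.symm)⟩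

lemma pair_le_aux (p q x y s : ℝ) (hp : 0 ≤ p) (hq : 0 ≤ q) (h : p + q = 2 * s) :
    p * x + q * y ≤ 2 * s * max x y := by
  rw [← h, add_mul]
  exact add_le_add (mul_le_mul_of_nonneg_left (le_max_left _ _) hp)
    (mul_le_mul_of_nonneg_left (le_max_right _ _) hq)

lemma max_sum_aux (x : Fin 3 → Fin 2 → ℝ) (h0 : ∀ t b, 0 ≤ x t b)
    (h1 : ∀ t, x t 0 + x t 1 = 1) (h2 : ∀ b, x 0 b + x 1 b + x 2 b = 3 / 2) :
    max (x 0 0) (x 0 1) + max (x 1 0) (x 1 1) + max (x 2 0) (x 2 1) ≤ 5 / 2 := by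
  have a := h1 0
  have b := h1 1
  have c := h1 2
  have e := h2 0
  have f := h2 1
  have := h0 0 0
  have := h0 0 1
  have := h0 1 0
  have := h0 1 1
  have := h0 2 0
  have := h0 2 1
  rcases max_cases (x 0 0) (x 0 1) with h | h <;>
  rcases max_cases (x 1 0) (x 1 1) with h' | h' <;>
  rcases max_cases (x 2 0) (x 2 1) with h'' | h'' <;>
  linarith [h.1, h'.1, h''.1]

theorem noncontextuality_inequality_unnormalized {d : ℕ}
    (K : Set (Matrix (Fin d) (Fin d) ℂ)) (hK : HasNCModel K)
    (σ : Fin 3 → Fin 2 → Matrix (Fin d) (Fin d) ℂ)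
    (σs : Matrix (Fin d) (Fin d) ℂ)
    (hσ : ∀ t b, σ t b ∈ coneOf K)
    (hmix : ∀ t, (1 / 2 : ℂ) • (σ t 0 + σ t 1) = σs)
    (M : Fin 3 → Fin 2 → Matrix (Fin d) (Fin d) ℂ)
    (hM : ∀ t b, (M t b).PosSemidef)
    (hMsum : ∀ t, M t 0 + M t 1 = 1)
    (hMavg : ∀ b, (1 / 3 : ℂ) • ∑ t, M t b = (1 / 2 : ℂ) • (1 : Matrix (Fin d) (Fin d) ℂ)) :
    ∑ t, ∑ b, (σ t b * M t b).trace ≤ 5 * σs.trace := by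
  obtain ⟨L, N, ω, -, hω, hN0, hN1, hmod⟩ := hK
  -- the model extends to the cone
  have hA : ∀ t b l, ∃ r : ℝ, 0 ≤ r ∧ (σ t b * N l).trace = (r : ℂ) := by
    intro t b l
    obtain ⟨μ, ρ, hμ, hρ, h⟩ := hσ t b
    obtain ⟨r, hr, e⟩ := nonneg_real_aux (hN0 ρ hρ l)
    refine ⟨μ * r, mul_nonneg hμ hr, ?_⟩
    rw [h, Matrix.smul_mul, Matrix.trace_smul, e]
    simp
  have hX : ∀ l t b, ∃ r : ℝ, 0 ≤ r ∧ (ω l * M t b).trace = (r : ℂ) := fun l t b =>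
    nonneg_real_aux (trace_mul_nonneg_aux (hω l).1 (hM t b))
  choose a ha0 ha using hA
  choose x hx0 hx using hX
  have hle : ∀ t b, (1 - M t b).PosSemidef := by
    intro t b
    rw [← hMsum t]
    fin_cases b
    · simpa using hM t 1
    · simpa using hM t 0
  have hcone : ∀ t b (E : Matrix (Fin d) (Fin d) ℂ), E.PosSemidef → (1 - E).PosSemidef →
      (σ t b * E).trace = ∑ l, (a t b l : ℂ) * (ω l * E).trace := by
    intro t b E hE hE'
    simp_rw [← ha]
    obtain ⟨μ, ρ, hμ, hρ, h⟩ := hσ t b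
    rw [h]
    simp only [Matrix.smul_mul, Matrix.trace_smul, smul_eq_mul]
    rw [hmod ρ hρ E hE hE', Finset.mul_sum]
    simp only [mul_assoc]
  have htr : ∀ t b, (σ t b).trace = ∑ l, (a t b l : ℂ) := by
    intro t b
    have := hcone t b 1 Matrix.PosSemidef.one (by simpa using Matrix.PosSemidef.zero)
    simpa [(hω _).2] using this
  have hsum1 : ∀ l t, x l t 0 + x l t 1 = 1 := by
    intro l t
    have h : (ω l * (M t 0 + M t 1)).trace = 1 := by rw [hMsum, mul_one, (hω l).2]
    rw [mul_add, Matrix.trace_add, hx, hx] at h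
    exact_mod_cast h
  have hsum2 : ∀ l b, x l 0 b + x l 1 b + x l 2 b = 3 / 2 := by
    intro l b
    have h := congrArg (fun E => (ω l * E).trace) (hMavg b)
    simp only [Fin.sum_univ_three, Matrix.mul_smul, Matrix.trace_smul, mul_add,
      Matrix.trace_add, mul_one, (hω l).2, hx, smul_eq_mul] at h
    have h' : (1 / 3 : ℝ) * (x l 0 b + x l 1 b + x l 2 b) = 1 / 2 := by
      have : (((1 / 3 : ℝ) * (x l 0 b + x l 1 b + x l 2 b) : ℝ) : ℂ) = ((1 / 2 : ℝ) : ℂ) := by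
        push_cast
        rw [← h]
        ring
      exact_mod_cast this
    linarith
  let s : Fin L → ℝ := fun l => (a 0 0 l + a 0 1 l) / 2
  have hs : ∀ t l, a t 0 l + a t 1 l = 2 * s l := by
    intro t l
    have h := congrArg (fun E => (E * N l).trace) ((hmix t).trans (hmix 0).symm)
    simp only [Matrix.smul_mul, add_mul, Matrix.trace_smul, Matrix.trace_add, ha,
      smul_eq_mul] at h
    have h' : (1 / 2 : ℝ) * (a t 0 l + a t 1 l) = 1 / 2 * (a 0 0 l + a 0 1 l) := by
      have : (((1 / 2 : ℝ) * (a t 0 l + a t 1 l) : ℝ) : ℂ)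
          = (((1 / 2 : ℝ) * (a 0 0 l + a 0 1 l) : ℝ) : ℂ) := by
        push_cast
        exact h
      exact_mod_cast this
    simp only [s]
    linarith
  have hR : σs.trace = ((∑ l, s l : ℝ) : ℂ) := by
    rw [← hmix 0, Matrix.trace_smul, Matrix.trace_add, htr, htr, ← Finset.sum_add_distrib,
      Finset.smul_sum]
    push_cast
    refine Finset.sum_congr rfl fun l _ => ?_
    simp only [s, smul_eq_mul]
    push_cast
    ring
  have hLHS : ∑ t, ∑ b, (σ t b * M t b).trace
      = ((∑ t, ∑ b, ∑ l, a t b l * x l t b : ℝ) : ℂ) := by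
    push_cast
    refine Finset.sum_congr rfl fun t _ => Finset.sum_congr rfl fun b _ => ?_
    rw [hcone t b _ (hM t b) (hle t b)]
    simp only [hx]
  rw [hLHS, hR]
  have key : ∑ t, ∑ b, ∑ l, a t b l * x l t b ≤ 5 * ∑ l, s l := by
    simp only [Fin.sum_univ_three, Fin.sum_univ_two, ← Finset.sum_add_distrib]
    rw [Finset.mul_sum]
    refine Finset.sum_le_sum fun l _ => ?_
    have p := fun t => pair_le_aux _ _ (x l t 0) (x l t 1) (s l) (ha0 t 0 l) (ha0 t 1 l) (hs t l)
    have m := max_sum_aux (x l) (hx0 l) (hsum1 l) (hsum2 l)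
    have s0 : 0 ≤ s l := by linarith [hs 0 l, ha0 0 0 l, ha0 0 1 l]
    have := mul_le_mul_of_nonneg_left m s0
    linarith [p 0, p 1, p 2]
  exact_mod_cast key
end
end

section
/- There exist dimensions m and n, a density matrix ρ_AB on ℂ^m ⊗ ℂ^n that is not separable, positive semidefinite n×n matrices E_{t,b} (t ∈ {1,2,3}, b ∈ {0,1}) with (E_{t,0} + E_{t,1})/2 equal to one fixed matrix E_* for all t, and positive semidefinite m×m matrices M_{t,b} with M_{t,0} + M_{t,1} = I_A for each t and (1/3) ∑_{t=1}^3 M_{t,b} = I_A/2 for each b, such that ∑_{t=1}^3 ∑_{b=0}^1 Tr[(M_{t,b} ⊗ E_{t,b}) ρ_AB] > 5 Tr[(I_A ⊗ E_*) ρ_AB]. -/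
open Matrix
open scoped Kronecker ComplexOrder BigOperators

noncomputable section

def phiVec : Fin 2 × Fin 2 → ℂ := fun p => if p.1 = p.2 then 1 else 0

def phiRho : Matrix (Fin 2 × Fin 2) (Fin 2 × Fin 2) ℂ :=
  (1 / 2 : ℂ) • vecMulVec phiVec (star phiVec)

def measM : Fin 3 → Fin 2 → Matrix (Fin 2) (Fin 2) ℂ :=
  ![![!![1, 0; 0, 0], !![0, 0; 0, 1]],
    ![!![1/4, 3/8; 3/8, 3/4], !![3/4, -3/8; -3/8, 1/4]],
    ![!![1/4, -3/8; -3/8, 3/4], !![3/4, 3/8; 3/8, 1/4]]]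

lemma measM_0_0 : measM 0 0 = !![1, 0; 0, 0] := rfl

lemma measM_0_1 : measM 0 1 = !![0, 0; 0, 1] := rfl

lemma measM_1_0 : measM 1 0 = !![1/4, 3/8; 3/8, 3/4] := rfl

lemma measM_1_1 : measM 1 1 = !![3/4, -3/8; -3/8, 1/4] := rfl

lemma measM_2_0 : measM 2 0 = !![1/4, -3/8; -3/8, 3/4] := rfl

lemma measM_2_1 : measM 2 1 = !![3/4, 3/8; 3/8, 1/4] := rfl

lemma psd_two (a b c d : ℝ) (hc : 0 ≤ c) (hd : 0 ≤ d) (A : Matrix (Fin 2) (Fin 2) ℂ)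
    (h00 : A 0 0 = a * a + c) (h01 : A 0 1 = a * b) (h10 : A 1 0 = b * a)
    (h11 : A 1 1 = b * b + d) : A.PosSemidef := by
  have h1 : (vecMulVec ![(a : ℂ), b] (star ![(a : ℂ), b])).PosSemidef :=
    posSemidef_vecMulVec_self_star _
  have h2 : (Matrix.diagonal ![(c : ℂ), d]).PosSemidef := by
    refine PosSemidef.diagonal ?_
    intro i
    fin_cases i
    · simpa using hc
    · simpa using hd
  convert h1.add h2 using 1
  ext i j
  fin_cases i <;> fin_cases j <;> rw [Matrix.add_apply, vecMulVec_apply] <;>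
    simp [h00, h01, h10, h11]

lemma measM_psd (t : Fin 3) (b : Fin 2) : (measM t b).PosSemidef := by
  fin_cases t <;> fin_cases b
  · apply psd_two 1 0 0 0 <;> norm_num [measM]
  · apply psd_two 0 1 0 0 <;> norm_num [measM]
  · apply psd_two (1/2) (3/4) 0 (3/16) <;> norm_num [measM]
  · apply psd_two (3/4) (-1/2) (3/16) 0 <;> norm_num [measM]
  · apply psd_two (1/2) (-3/4) 0 (3/16) <;> norm_num [measM]
  · apply psd_two (3/4) (1/2) (3/16) 0 <;> norm_num [measM]

lemma phiRho_density : IsDensity phiRho := by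
  constructor
  · refine PosSemidef.smul (posSemidef_vecMulVec_self_star _) ?_
    have : (0 : ℂ) ≤ ((1 / 2 : ℝ) : ℂ) := Complex.zero_le_real.2 (by norm_num)
    simpa using this
  · simp [Matrix.trace, phiRho, vecMulVec_apply, phiVec, Fintype.sum_prod_type]

/-- The swap-type witness used for the partial-transpose criterion. -/
lemma term_nonneg (w k : Matrix (Fin 2) (Fin 2) ℂ) (hw : w.PosSemidef) (hk : k.PosSemidef) :
    0 ≤ (w ⊗ₖ k) (0, 1) (0, 1) + (w ⊗ₖ k) (1, 0) (1, 0)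
      - (w ⊗ₖ k) (0, 0) (1, 1) - (w ⊗ₖ k) (1, 1) (0, 0) := by
  have h := (hw.kronecker hk.transpose).dotProduct_mulVec_nonneg
    (fun p : Fin 2 × Fin 2 => if p = (0, 1) then (1 : ℂ) else if p = (1, 0) then -1 else 0)
  simp [dotProduct, mulVec, Fintype.sum_prod_type] at h
  convert h using 1
  simp
  ring

lemma phiRho_not_sep : ¬ Separable phiRho := by
  rintro ⟨L, w, k, hw, hk, h⟩
  have h0 : 0 ≤ ∑ l, ((w l ⊗ₖ k l) (0, 1) (0, 1) + (w l ⊗ₖ k l) (1, 0) (1, 0)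
      - (w l ⊗ₖ k l) (0, 0) (1, 1) - (w l ⊗ₖ k l) (1, 1) (0, 0)) :=
    Finset.sum_nonneg fun l _ => term_nonneg _ _ (hw l).1 (hk l)
  rw [Finset.sum_sub_distrib, Finset.sum_sub_distrib, Finset.sum_add_distrib] at h0
  simp only [← Matrix.sum_apply] at h0
  rw [← h] at h0
  have h1 := (Complex.le_def.1 h0).1
  norm_num [phiRho, vecMulVec_apply, phiVec] at h1

theorem exists_entangled_state_violating_witness :
    ∃ (m n : ℕ) (ρ : Matrix (Fin m × Fin n) (Fin m × Fin n) ℂ)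
      (E : Fin 3 → Fin 2 → Matrix (Fin n) (Fin n) ℂ) (Es : Matrix (Fin n) (Fin n) ℂ)
      (M : Fin 3 → Fin 2 → Matrix (Fin m) (Fin m) ℂ),
      IsDensity ρ ∧ ¬ Separable ρ ∧
      (∀ t b, (E t b).PosSemidef) ∧
      (∀ t, (1 / 2 : ℂ) • (E t 0 + E t 1) = Es) ∧
      (∀ t b, (M t b).PosSemidef) ∧
      (∀ t, M t 0 + M t 1 = 1) ∧
      (∀ b, (1 / 3 : ℂ) • ∑ t, M t b = (1 / 2 : ℂ) • (1 : Matrix (Fin m) (Fin m) ℂ)) ∧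
      5 * ((((1 : Matrix (Fin m) (Fin m) ℂ) ⊗ₖ Es)) * ρ).trace <
        ∑ t, ∑ b, (((M t b) ⊗ₖ (E t b)) * ρ).trace := by
  refine ⟨2, 2, phiRho, measM, (1 / 2 : ℂ) • 1, measM, phiRho_density, phiRho_not_sep,
    measM_psd, ?_, measM_psd, ?_, ?_, ?_⟩
  · intro t
    fin_cases t <;> ext i j <;> fin_cases i <;> fin_cases j <;> norm_num [measM]
  · intro t
    fin_cases t <;> ext i j <;> fin_cases i <;> fin_cases j <;> norm_num [measM]
  · intro t
    fin_cases t <;> ext i j <;> fin_cases i <;> fin_cases j <;>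
      norm_num [Fin.sum_univ_three, measM_0_0, measM_0_1, measM_1_0, measM_1_1, measM_2_0, measM_2_1]
  · have hl : 5 * ((((1 : Matrix (Fin 2) (Fin 2) ℂ) ⊗ₖ ((1 / 2 : ℂ) • 1))) * phiRho).trace
        = ((5 / 2 : ℝ) : ℂ) := by
      simp [Matrix.trace, Matrix.mul_apply, phiRho, vecMulVec_apply, phiVec,
        Fintype.sum_prod_type, Matrix.one_apply]
      try norm_num
    have hr : ∑ t, ∑ b, (((measM t b) ⊗ₖ (measM t b)) * phiRho).trace
        = ((45 / 16 : ℝ) : ℂ) := by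
      simp [Matrix.trace, Matrix.mul_apply, phiRho, vecMulVec_apply, phiVec,
        Fintype.sum_prod_type, Fin.sum_univ_three,
        measM_0_0, measM_0_1, measM_1_0, measM_1_1, measM_2_0, measM_2_1]
      try norm_num
    rw [hl, hr]
    exact Complex.real_lt_real.2 (by norm_num)
end
end

section
/- For every separable density matrix ρ_AB on ℂ² ⊗ ℂ², one has Tr[(σ_x ⊗ σ_x) ρ_AB] + Tr[(σ_z ⊗ σ_z) ρ_AB] ≤ 4/3. -/
open Matrix
open scoped Kronecker ComplexOrder BigOperators

noncomputable section

/-- The Pauli matrix σ_x. -/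
def pauliX : Matrix (Fin 2) (Fin 2) ℂ := !![0, 1; 1, 0]

/-- The Pauli matrix σ_z. -/
def pauliZ : Matrix (Fin 2) (Fin 2) ℂ := !![1, 0; 0, -1]

lemma psd_two_aux (P : Matrix (Fin 2) (Fin 2) ℂ) (hP : P.PosSemidef) :
    ∃ t x z : ℝ, 0 ≤ t ∧ x ^ 2 + z ^ 2 ≤ t ^ 2 ∧ P.trace = (t : ℂ) ∧
      (pauliX * P).trace = (x : ℂ) ∧ (pauliZ * P).trace = (z : ℂ) := by
  have h00 : 0 ≤ P 0 0 := hP.diag_nonneg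
  have h11 : 0 ≤ P 1 1 := hP.diag_nonneg
  have h10 : star (P 0 1) = P 1 0 := hP.1.apply 1 0
  have hd := hP.det_nonneg
  rw [Matrix.det_fin_two, ← h10] at hd
  rw [Complex.le_def] at h00 h11 hd
  obtain ⟨a0, a1⟩ := h00
  obtain ⟨b0, b1⟩ := h11
  obtain ⟨d0, -⟩ := hd
  simp only [Complex.zero_re, Complex.zero_im, Complex.sub_re, Complex.mul_re, ← a1, ← b1,
    Complex.star_def, Complex.conj_re, Complex.conj_im] at a0 b0 d0
  refine ⟨(P 0 0).re + (P 1 1).re, 2 * (P 0 1).re, (P 0 0).re - (P 1 1).re, by linarith, ?_, ?_, ?_, ?_⟩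
  · nlinarith [sq_nonneg (P 0 1).im]
  · apply Complex.ext <;> simp [Matrix.trace_fin_two, ← a1, ← b1]
  · rw [Matrix.trace_fin_two, Matrix.mul_apply, Matrix.mul_apply, Fin.sum_univ_two,
      Fin.sum_univ_two, ← h10]
    apply Complex.ext
    · simp [pauliX]
      ring
    · simp [pauliX]
  · rw [Matrix.trace_fin_two, Matrix.mul_apply, Matrix.mul_apply, Fin.sum_univ_two,
      Fin.sum_univ_two]
    apply Complex.ext
    · simp [pauliZ]
      ring
    · simp [pauliZ, ← a1, ← b1]

lemma product_aux (P Q : Matrix (Fin 2) (Fin 2) ℂ) (hP : P.PosSemidef) (hQ : Q.PosSemidef) :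
    ((pauliX ⊗ₖ pauliX) * (P ⊗ₖ Q)).trace + ((pauliZ ⊗ₖ pauliZ) * (P ⊗ₖ Q)).trace
      ≤ (P ⊗ₖ Q).trace := by
  obtain ⟨t, x, z, ht, h, e1, e2, e3⟩ := psd_two_aux P hP
  obtain ⟨t', x', z', ht', h', e1', e2', e3'⟩ := psd_two_aux Q hQ
  simp only [← Matrix.mul_kronecker_mul, Matrix.trace_kronecker, e1, e2, e3, e1', e2', e3']
  have key : x * x' + z * z' ≤ t * t' := by
    refine abs_le_of_sq_le_sq' ?_ (mul_nonneg ht ht') |>.2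
    have := mul_le_mul h h' (by positivity) (by positivity)
    nlinarith [sq_nonneg (x * z' - z * x')]
  exact_mod_cast key

theorem witness_xx_zz_separable_bound
    (ρ : Matrix (Fin 2 × Fin 2) (Fin 2 × Fin 2) ℂ)
    (hρ : IsDensity ρ) (hsep : Separable ρ) :
    ((pauliX ⊗ₖ pauliX) * ρ).trace + ((pauliZ ⊗ₖ pauliZ) * ρ).trace ≤ (4 / 3 : ℂ) := by
  obtain ⟨L, ω, κ, hω, hκ, rfl⟩ := hsep
  have h1 := hρ.2
  have h2 : (1 : ℂ) ≤ 4 / 3 := by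
    have : (1 : ℝ) ≤ 4 / 3 := by norm_num
    have h3 := Complex.real_le_real.mpr this
    push_cast at h3
    exact h3
  refine le_trans ?_ h2
  rw [← h1, Matrix.mul_sum, Matrix.mul_sum, Matrix.trace_sum, Matrix.trace_sum, Matrix.trace_sum,
    ← Finset.sum_add_distrib]
  exact Finset.sum_le_sum fun l _ => product_aux _ _ (hω l).1 (hκ l)
end
end

section
/- Let ρ_AB be a separable density matrix on ℂ^m ⊗ ℂ^n, let A₁, A₂ be Hermitian m×m matrices with −I_A ≤ A_i ≤ I_A, and let B₁, B₂ be Hermitian n×n matrices with −I_B ≤ B_i ≤ I_B. Then Tr[(A₁ ⊗ (B₁ + B₂) + A₂ ⊗ (B₁ − B₂)) ρ_AB] ≤ 2. -/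
open Matrix
open scoped Kronecker ComplexOrder BigOperators

noncomputable section

open scoped MatrixOrder in
theorem exists_factor_aux {d : ℕ} {P : Matrix (Fin d) (Fin d) ℂ}
    (hP : P.PosSemidef) : ∃ C : Matrix (Fin d) (Fin d) ℂ, P = Cᴴ * C := by
  obtain ⟨X, hX, -, h⟩ :=
    CFC.exists_sqrt_of_isSelfAdjoint_of_quasispectrumRestricts hP.isHermitian
      (QuasispectrumRestricts.nnreal_of_nonneg hP.nonneg)
  refine ⟨X, ?_⟩
  rw [← Matrix.star_eq_conjTranspose, hX.star_eq]
  exact h.symm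

theorem trace_mul_nonneg_aux_s12 {d : ℕ} {P Q : Matrix (Fin d) (Fin d) ℂ}
    (hP : P.PosSemidef) (hQ : Q.PosSemidef) : 0 ≤ (P * Q).trace := by
  obtain ⟨C, rfl⟩ := exists_factor_aux hP
  rw [Matrix.mul_assoc, Matrix.trace_mul_comm]
  exact (hQ.mul_mul_conjTranspose_same C).trace_nonneg

theorem chsh_scalar_aux {a₁ a₂ b₁ b₂ k : ℂ} (h1 : 0 ≤ 1 - a₁) (h2 : 0 ≤ a₁ + 1)
    (h3 : 0 ≤ 1 - a₂) (h4 : 0 ≤ a₂ + 1) (h5 : 0 ≤ k - b₁) (h6 : 0 ≤ b₁ + k)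
    (h7 : 0 ≤ k - b₂) (h8 : 0 ≤ b₂ + k) :
    a₁ * (b₁ + b₂) + a₂ * (b₁ - b₂) ≤ 2 * k := by
  have e : 2 * k - (a₁ * (b₁ + b₂) + a₂ * (b₁ - b₂)) =
      (1 / 2 : ℝ) * ((a₁ + 1) * (a₂ + 1) * (k - b₁) + (a₁ + 1) * (1 - a₂) * (k - b₂)
        + (1 - a₁) * (a₂ + 1) * (b₂ + k) + (1 - a₁) * (1 - a₂) * (b₁ + k)) := by
    push_cast
    ring
  have hh : (0 : ℂ) ≤ ((1 / 2 : ℝ) : ℂ) := by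
    rw [Complex.zero_le_real]; norm_num
  rw [← sub_nonneg, e]
  exact mul_nonneg hh (add_nonneg (add_nonneg (add_nonneg
    (mul_nonneg (mul_nonneg h2 h4) h5) (mul_nonneg (mul_nonneg h2 h3) h7))
    (mul_nonneg (mul_nonneg h1 h4) h8)) (mul_nonneg (mul_nonneg h1 h3) h6))

theorem chsh_witness_separable_bound {m n : ℕ}
    (ρ : Matrix (Fin m × Fin n) (Fin m × Fin n) ℂ)
    (hρ : IsDensity ρ) (hsep : Separable ρ)
    (A₁ A₂ : Matrix (Fin m) (Fin m) ℂ) (B₁ B₂ : Matrix (Fin n) (Fin n) ℂ)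
    (hA₁ : A₁.IsHermitian) (hA₂ : A₂.IsHermitian)
    (hB₁ : B₁.IsHermitian) (hB₂ : B₂.IsHermitian)
    (hA₁u : (1 - A₁).PosSemidef) (hA₁l : (A₁ + 1).PosSemidef)
    (hA₂u : (1 - A₂).PosSemidef) (hA₂l : (A₂ + 1).PosSemidef)
    (hB₁u : (1 - B₁).PosSemidef) (hB₁l : (B₁ + 1).PosSemidef)
    (hB₂u : (1 - B₂).PosSemidef) (hB₂l : (B₂ + 1).PosSemidef) :
    ((A₁ ⊗ₖ (B₁ + B₂) + A₂ ⊗ₖ (B₁ - B₂)) * ρ).trace ≤ 2 := by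
  obtain ⟨L, ω, κ, hω, hκ, rfl⟩ := hsep
  have ht : ∑ l, (κ l).trace = 1 := by
    have h := hρ.2
    rw [Matrix.trace_sum] at h
    rw [← h]
    refine Finset.sum_congr rfl fun l _ => ?_
    rw [Matrix.trace_kronecker, (hω l).2, one_mul]
  rw [Matrix.mul_sum, Matrix.trace_sum]
  have h2 : (2 : ℂ) = ∑ l, 2 * (κ l).trace := by
    rw [← Finset.mul_sum, ht, mul_one]
  rw [h2]
  refine Finset.sum_le_sum fun l _ => ?_
  rw [Matrix.add_mul, Matrix.trace_add, ← Matrix.mul_kronecker_mul, ← Matrix.mul_kronecker_mul,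
    Matrix.trace_kronecker, Matrix.trace_kronecker, Matrix.add_mul, Matrix.sub_mul,
    Matrix.trace_add, Matrix.trace_sub]
  have au : ∀ A : Matrix (Fin m) (Fin m) ℂ, (1 - A).PosSemidef → 0 ≤ 1 - (A * ω l).trace := by
    intro A hA
    have h := trace_mul_nonneg_aux_s12 hA (hω l).1
    rwa [Matrix.sub_mul, Matrix.one_mul, Matrix.trace_sub, (hω l).2] at h
  have al : ∀ A : Matrix (Fin m) (Fin m) ℂ, (A + 1).PosSemidef → 0 ≤ (A * ω l).trace + 1 := by
    intro A hA
    have h := trace_mul_nonneg_aux_s12 hA (hω l).1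
    rwa [Matrix.add_mul, Matrix.one_mul, Matrix.trace_add, (hω l).2] at h
  have bu : ∀ B : Matrix (Fin n) (Fin n) ℂ, (1 - B).PosSemidef →
      0 ≤ (κ l).trace - (B * κ l).trace := by
    intro B hB
    have h := trace_mul_nonneg_aux_s12 hB (hκ l)
    rwa [Matrix.sub_mul, Matrix.one_mul, Matrix.trace_sub] at h
  have bl : ∀ B : Matrix (Fin n) (Fin n) ℂ, (B + 1).PosSemidef →
      0 ≤ (B * κ l).trace + (κ l).trace := by
    intro B hB
    have h := trace_mul_nonneg_aux_s12 hB (hκ l)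
    rwa [Matrix.add_mul, Matrix.one_mul, Matrix.trace_add] at h
  exact chsh_scalar_aux (au _ hA₁u) (al _ hA₁l) (au _ hA₂u) (al _ hA₂l)
    (bu _ hB₁u) (bl _ hB₁l) (bu _ hB₂u) (bl _ hB₂l)
end
end
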